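/- arXiv:2112.12079 — 2 statements merged into one kernel-verified Lean document; each statement's English description precedes it below -/
import Mathlib

section
/- Let p be a prime and n ≥ 6 even. Then the polynomial Y(x) = p^{n-2} + p^{n-4}·x^2 + p^n·x^3 + x^n in ℤ[x] is either irreducible over ℤ, or has a factor whose degree is a multiple of (n-2)/2. -/
/-!
Write `n = 2q + 4`. The Newton polygon of `Y` at `p` says that every complex root `z` of `Y` makes
both `p / z` and `z ^ (q + 1) / p ^ q` algebraic integers. Multiplying over the roots of a monic
factor of degree `d` and constant term `± p ^ e`, and writing `d = e + k`, we get `0 ≤ k` and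
`(q + 1) * k ≤ d`. For two complementary factors the values of `k` add up to `2`, so the two
differences `d - (q + 1) * k` add up to `2` as well. If one of them is `0`, then `q + 1` divides
the degree of that factor. The remaining case, where both are `1`, is archimedean: the scaled roots
`y = z / p` satisfy `1 + y ^ 2 + p ^ 5 * y ^ 3 + p ^ 2 * y ^ (2 * q + 4) = 0`, hence have size about
`p ^ (-5 / 3)` or about `p ^ (3 / (2 * q + 1))`, and `(q + 1) * k + 1` numbers of these two sizes
cannot have a product of size `p ^ (-k)` if `k ≤ 1`, which holds for one of the two factors.
-/

open Polynomial

lemma card_aroots_of_monic {R L : Type*} [CommRing R] [Field L] [IsAlgClosed L] [Algebra R L]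
    {f : R[X]} (hf : f.Monic) : (f.aroots L).card = f.natDegree :=
  IsAlgClosed.card_aroots_eq_natDegree_of_isUnit_leadingCoeff (by simp [hf.leadingCoeff])

section IntegralRoots

variable {R L : Type*} [CommRing R] [IsDomain R] [IsIntegrallyClosed R] [Field L] [Algebra R L]
  [FaithfulSMul R L]

lemma dvd_of_isIntegral_of_algebraMap_mul_eq {a b : R} {t : L} (ht : IsIntegral R t)
    (h : algebraMap R L b * t = algebraMap R L a) : b ∣ a := by
  have hinj := FaithfulSMul.algebraMap_injective R L
  obtain rfl | hb := eq_or_ne b 0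
  · rw [map_zero, zero_mul, eq_comm, map_eq_zero_iff _ hinj] at h
    rw [h]
  let : Algebra (FractionRing R) L := FractionRing.liftAlgebra R L
  have ht' : t = algebraMap (FractionRing R) L
      (algebraMap R (FractionRing R) a / algebraMap R (FractionRing R) b) := by
    rw [map_div₀, ← IsScalarTower.algebraMap_apply, ← IsScalarTower.algebraMap_apply, ← h,
      mul_div_cancel_left₀ _ ((map_ne_zero_iff _ hinj).2 hb)]
  rw [ht', isIntegral_algebraMap_iff (algebraMap (FractionRing R) L).injective,
    IsIntegrallyClosed.isIntegral_iff] at ht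
  obtain ⟨c, hc⟩ := ht
  refine ⟨c, IsFractionRing.injective R (FractionRing R) ?_⟩
  rw [map_mul, hc, mul_div_cancel₀]
  simpa using hb

lemma pow_natDegree_mul_coeff_zero_pow_dvd [IsAlgClosed L] {f : R[X]} (hf : f.Monic) {a b : R}
    {k m : ℕ} (t : L → L) (ht : ∀ z ∈ f.aroots L, IsIntegral R (t z))
    (h : ∀ z ∈ f.aroots L, algebraMap R L b * z ^ m * t z = algebraMap R L a * z ^ k) :
    b ^ f.natDegree * f.coeff 0 ^ m ∣ a ^ f.natDegree * f.coeff 0 ^ k := by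
  have hcoeff : algebraMap R L (f.coeff 0) = (-1) ^ f.natDegree * (f.aroots L).prod := by
    rw [← coeff_map, (IsAlgClosed.splits _).coeff_zero_eq_prod_roots_of_monic (hf.map _),
      hf.natDegree_map]
  have hprod := congrArg Multiset.prod (Multiset.map_congr rfl h)
  simp only [Multiset.prod_map_mul, Multiset.map_const', Multiset.prod_replicate,
    Multiset.prod_map_pow, Multiset.map_id', card_aroots_of_monic hf] at hprod
  generalize hε : (-1 : L) ^ f.natDegree = ε at hcoeff
  have hεε : ε * ε = 1 := by rw [← hε, ← mul_pow, neg_one_mul, neg_neg, one_pow]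
  have hεint : IsIntegral R ε := hε ▸ isIntegral_one.neg.pow _
  refine dvd_of_isIntegral_of_algebraMap_mul_eq (t := ε ^ m * ε ^ k * ((f.aroots L).map t).prod)
    (((hεint.pow m).mul (hεint.pow k)).mul
      (IsIntegral.multiset_prod (Multiset.forall_mem_map_iff.2 ht))) ?_
  simp only [map_mul, map_pow, hcoeff]
  calc _ = (ε * ε) ^ m * ε ^ k * (algebraMap R L b ^ f.natDegree * (f.aroots L).prod ^ m *
        ((f.aroots L).map t).prod) := by ring
    _ = _ := by rw [hprod, hεε, one_pow]; ring

end IntegralRoots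

lemma sum_map_logb_norm_roots {K : Type*} [NormedField K] [IsAlgClosed K] {f : K[X]}
    (hf : f.Monic) (h0 : f.coeff 0 ≠ 0) (b : ℝ) :
    (f.roots.map fun z => Real.logb b ‖z‖).sum = Real.logb b ‖f.coeff 0‖ := by
  have hroot : ∀ z ∈ f.roots, z ≠ 0 := by
    rintro _ hz rfl
    exact h0 (by simpa [coeff_zero_eq_eval_zero] using (mem_roots'.1 hz).2)
  have hprod : ‖f.coeff 0‖ = (f.roots.map fun z => ‖z‖).prod := by
    rw [(IsAlgClosed.splits f).coeff_zero_eq_prod_roots_of_monic hf]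
    simpa using (Multiset.prod_hom f.roots (normHom : K →*₀ ℝ)).symm
  have hne : ∀ u ∈ f.roots.map fun z => ‖z‖, u ≠ 0 := by
    simpa only [Multiset.forall_mem_map_iff, norm_ne_zero_iff] using hroot
  rw [hprod, Real.logb, Real.log_multiset_prod hne, Multiset.map_map, ← Multiset.sum_map_div]
  rfl

lemma sum_mem_Icc_card_mul {s : Multiset ℝ} {a b : ℝ} (h : ∀ x ∈ s, x ∈ Set.Icc a b) :
    s.sum ∈ Set.Icc (s.card * a) (s.card * b) := by
  rw [← nsmul_eq_mul, ← nsmul_eq_mul]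
  exact ⟨s.card_nsmul_le_sum fun x hx => (h x hx).1, s.sum_le_card_nsmul b fun x hx => (h x hx).2⟩

lemma exists_add_eq_and_sum_mem_Icc {s : Multiset ℝ} {a b c a' b' : ℝ}
    (h : ∀ x ∈ s, x ∈ Set.Icc a b ∨ c * x ∈ Set.Icc a' b') :
    ∃ t u, t + u = s ∧ t.sum ∈ Set.Icc (t.card * a) (t.card * b) ∧
      c * u.sum ∈ Set.Icc (u.card * a') (u.card * b') := by
  classical
  refine ⟨s.filter (· ∈ Set.Icc a b), s.filter (· ∉ Set.Icc a b), Multiset.filter_add_not _ _,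
    sum_mem_Icc_card_mul fun x hx => (Multiset.mem_filter.1 hx).2, ?_⟩
  have hscaled : ∀ y ∈ (s.filter (· ∉ Set.Icc a b)).map (c * ·), y ∈ Set.Icc a' b' :=
    Multiset.forall_mem_map_iff.2 fun x hx =>
      (h x (Multiset.mem_filter.1 hx).1).resolve_left (Multiset.mem_filter.1 hx).2
  have hsum := sum_mem_Icc_card_mul hscaled
  rwa [Multiset.card_map, Multiset.sum_map_mul_left (f := fun x => x), Multiset.map_id'] at hsum

lemma norm_le_add₃_of_add_eq_zero {E : Type*} [SeminormedAddCommGroup E] {a b c d : E}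
    (h : a + b + c + d = 0) : ‖a‖ ≤ ‖b‖ + ‖c‖ + ‖d‖ := by
  rw [← norm_neg a, show -a = b + c + d by rw [neg_eq_iff_add_eq_zero, ← h]; abel]
  exact norm_add₃_le

section RootSize

variable {P : ℝ} {m : ℕ} {y : ℂ}

lemma one_le_sq_mul_norm_of_root (hP : 2 ≤ P) (hy1 : ‖y‖ ≤ 1)
    (hy : 1 + y ^ 2 + (P : ℂ) ^ 5 * y ^ 3 + (P : ℂ) ^ 2 * y ^ (m + 3) = 0) :
    1 ≤ P ^ 2 * ‖y‖ := by
  have hpow : ‖y‖ ^ (m + 3) ≤ ‖y‖ ^ 3 := pow_le_pow_of_le_one (norm_nonneg y) hy1 (by lia)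
  have hle : 1 ≤ ‖y‖ ^ 2 + P ^ 5 * ‖y‖ ^ 3 + P ^ 2 * ‖y‖ ^ 3 := by
    have h := norm_le_add₃_of_add_eq_zero hy
    rw [norm_one, norm_mul, norm_mul, norm_pow, norm_pow, norm_pow, norm_pow, norm_pow,
      Complex.norm_of_nonneg (by linarith)] at h
    exact h.trans (by gcongr)
  by_contra! hlt
  have hu0 := norm_nonneg y
  generalize ‖y‖ = u at *
  have hPu : P * u ≤ 1 / 2 := by nlinarith
  have hu : u ≤ 1 / 4 := by nlinarith
  have hsq : u ^ 2 ≤ 1 / 16 := by nlinarith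
  have hcube : P ^ 5 * u ^ 3 ≤ 1 / 2 :=
    calc P ^ 5 * u ^ 3 = (P ^ 2 * u) ^ 2 * (P * u) := by ring
      _ ≤ 1 ^ 2 * (1 / 2) := by gcongr
      _ = 1 / 2 := by norm_num
  have hlast : P ^ 2 * u ^ 3 ≤ 1 / 16 :=
    calc P ^ 2 * u ^ 3 = P ^ 2 * u * u ^ 2 := by ring
      _ ≤ 1 * (1 / 16) := by gcongr
      _ = 1 / 16 := by norm_num
  linarith

lemma pow_four_mul_norm_pow_three_le_one_of_root (hP : 2 ≤ P) (hy1 : ‖y‖ ≤ 1)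
    (hy : 1 + y ^ 2 + (P : ℂ) ^ 5 * y ^ 3 + (P : ℂ) ^ 2 * y ^ (m + 3) = 0) :
    P ^ 4 * ‖y‖ ^ 3 ≤ 1 := by
  have hpow : ‖y‖ ^ (m + 3) ≤ ‖y‖ ^ 3 := pow_le_pow_of_le_one (norm_nonneg y) hy1 (by lia)
  have hle : P ^ 5 * ‖y‖ ^ 3 ≤ 1 + ‖y‖ ^ 2 + P ^ 2 * ‖y‖ ^ 3 := by
    have h := norm_le_add₃_of_add_eq_zero (a := (P : ℂ) ^ 5 * y ^ 3) (b := 1) (c := y ^ 2)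
      (d := (P : ℂ) ^ 2 * y ^ (m + 3)) (by linear_combination hy)
    rw [norm_one, norm_mul, norm_mul, norm_pow, norm_pow, norm_pow, norm_pow, norm_pow,
      Complex.norm_of_nonneg (by linarith)] at h
    exact h.trans (by gcongr)
  have hu0 := norm_nonneg y
  generalize ‖y‖ = u at *
  have hP3 : 8 ≤ P ^ 3 := by
    calc (8 : ℝ) = 2 ^ 3 := by norm_num
      _ ≤ P ^ 3 := by gcongr
  have hdom : 7 / 8 * P ^ 5 * u ^ 3 ≤ 1 + u ^ 2 := by
    have : 8 * P ^ 2 * u ^ 3 ≤ P ^ 5 * u ^ 3 :=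
      calc 8 * P ^ 2 * u ^ 3 ≤ P ^ 3 * P ^ 2 * u ^ 3 := by gcongr
        _ = P ^ 5 * u ^ 3 := by ring
    linarith
  have hu : u ≤ 1 / 2 := by
    have hP5 : 2 ^ 5 ≤ P ^ 5 := by gcongr
    by_contra! hlt
    nlinarith [mul_le_mul_of_nonneg_right hP5 (pow_nonneg hu0 3)]
  have hP5 : P * (P ^ 4 * u ^ 3) ≤ 10 / 7 := by nlinarith
  nlinarith [show 0 ≤ P ^ 4 * u ^ 3 by positivity]

lemma abs_norm_pow_sub_le_of_root (hP : 2 ≤ P) (hy1 : 1 ≤ ‖y‖)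
    (hy : 1 + y ^ 2 + (P : ℂ) ^ 5 * y ^ 3 + (P : ℂ) ^ 2 * y ^ (m + 3) = 0) :
    |‖y‖ ^ m - P ^ 3| ≤ 1 / 2 := by
  have hPn : ‖(P : ℂ)‖ = P := Complex.norm_of_nonneg (by linarith)
  have hle : P ^ 2 * ‖y‖ ^ 3 * ‖y ^ m + (P : ℂ) ^ 3‖ ≤ 1 + ‖y‖ ^ 2 :=
    calc P ^ 2 * ‖y‖ ^ 3 * ‖y ^ m + (P : ℂ) ^ 3‖
        = ‖(P : ℂ) ^ 2 * y ^ 3 * (y ^ m + (P : ℂ) ^ 3)‖ := by simp only [norm_mul, norm_pow, hPn]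
      _ = ‖-(1 + y ^ 2)‖ := by congr 1; linear_combination hy
      _ ≤ 1 + ‖y‖ ^ 2 := by rw [norm_neg]; exact (norm_add_le _ _).trans_eq (by simp)
  have hsub : |‖y‖ ^ m - P ^ 3| ≤ ‖y ^ m + (P : ℂ) ^ 3‖ := by
    have h := abs_norm_sub_norm_le (y ^ m) (-((P : ℂ) ^ 3))
    rwa [norm_neg, norm_pow, norm_pow, hPn, sub_neg_eq_add] at h
  have hsq : 1 + ‖y‖ ^ 2 ≤ 2 * ‖y‖ ^ 3 := by nlinarith
  have hfour : 4 * ‖y‖ ^ 3 ≤ P ^ 2 * ‖y‖ ^ 3 := by gcongr; nlinarith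
  refine hsub.trans (le_of_mul_le_mul_left ?_ (show 0 < 4 * ‖y‖ ^ 3 by positivity))
  calc 4 * ‖y‖ ^ 3 * ‖y ^ m + (P : ℂ) ^ 3‖ ≤ P ^ 2 * ‖y‖ ^ 3 * ‖y ^ m + (P : ℂ) ^ 3‖ := by gcongr
    _ ≤ 4 * ‖y‖ ^ 3 * (1 / 2) := by linarith

lemma logb_norm_mem_Icc_of_root (hP : 2 ≤ P)
    (hy : 1 + y ^ 2 + (P : ℂ) ^ 5 * y ^ 3 + (P : ℂ) ^ 2 * y ^ (m + 3) = 0) :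
    Real.logb P ‖y‖ ∈ Set.Icc (-2) (-4 / 3) ∨ m * Real.logb P ‖y‖ ∈ Set.Icc 2 (10 / 3) := by
  have hP1 : 1 < P := by linarith
  have hlogP : Real.logb P P = 1 := Real.logb_self_eq_one hP1
  have hy0 : 0 < ‖y‖ := norm_pos_iff.2 fun h => by simp [h] at hy
  rcases le_total ‖y‖ 1 with hy1 | hy1
  · left
    have hlow := Real.logb_nonneg hP1 (one_le_sq_mul_norm_of_root hP hy1 hy)
    have hupp := Real.logb_nonpos hP1 (by positivity)
      (pow_four_mul_norm_pow_three_le_one_of_root hP hy1 hy)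
    rw [Real.logb_mul (by positivity) (by positivity), Real.logb_pow, hlogP] at hlow
    rw [Real.logb_mul (by positivity) (by positivity), Real.logb_pow, Real.logb_pow, hlogP] at hupp
    push_cast at hlow hupp
    constructor <;> linarith
  · right
    obtain ⟨hlow, hupp⟩ := abs_le.1 (abs_norm_pow_sub_le_of_root hP hy1 hy)
    have hP3 : 8 ≤ P ^ 3 :=
      calc (8 : ℝ) = 2 ^ 3 := by norm_num
        _ ≤ P ^ 3 := by gcongr
    have hsq : P ^ 2 ≤ ‖y‖ ^ m := by nlinarith
    have hten : (‖y‖ ^ m) ^ 3 ≤ P ^ 10 :=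
      calc (‖y‖ ^ m) ^ 3 ≤ (17 / 16 * P ^ 3) ^ 3 := by gcongr; linarith
        _ = (17 / 16) ^ 3 * P ^ 9 := by ring
        _ ≤ P * P ^ 9 := by gcongr; linarith
        _ = P ^ 10 := by ring
    have hlog2 := Real.logb_le_logb_of_le hP1 (by positivity) hsq
    have hlog10 := Real.logb_le_logb_of_le hP1 (by positivity) hten
    simp only [Real.logb_pow, hlogP] at hlog2 hlog10
    push_cast at hlog2 hlog10
    constructor <;> linarith

end RootSize

lemma sum_ne_neg_of_forall_mem_Icc {q k : ℕ} (hk : k ≤ 1) {s : Multiset ℝ}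
    (hcard : s.card = (q + 1) * k + 1)
    (h : ∀ ν ∈ s, ν ∈ Set.Icc (-2) (-4 / 3) ∨
      ((2 * q + 1 : ℕ) : ℝ) * ν ∈ Set.Icc (2 : ℝ) (10 / 3)) :
    s.sum ≠ -k := by
  intro hsum
  have hm : (0 : ℝ) < (2 * q + 1 : ℕ) := by positivity
  obtain ⟨small, large, hsplit, ⟨hsmall₁, hsmall₂⟩, hlarge₁, hlarge₂⟩ :=
    exists_add_eq_and_sum_mem_Icc h
  rw [← hsplit, Multiset.sum_add] at hsum
  rw [← hsplit, Multiset.card_add] at hcard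
  have hcard' : (small.card + large.card : ℝ) = (q + 1) * k + 1 := by exact_mod_cast hcard
  have hk' : (k : ℝ) ≤ 1 := by exact_mod_cast hk
  have hqk : (q * k : ℝ) ≤ q := mul_le_of_le_one_right q.cast_nonneg hk'
  push_cast at hm hlarge₁ hlarge₂
  rcases le_or_gt small.card k with hle | hgt
  · have hle' : (small.card : ℝ) ≤ k := by exact_mod_cast hle
    have hsum_le : large.sum ≤ k := by linarith
    have hmul_le := mul_le_mul_of_nonneg_left hsum_le hm.le
    linarith
  · have hgt' : (k + 1 : ℝ) ≤ small.card := by exact_mod_cast hgt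
    have hle_sum : (k + 4) / 3 ≤ large.sum := by linarith
    have hle_mul := mul_le_mul_of_nonneg_left hle_sum hm.le
    linarith

/-- The polynomial `Y` of the theorem for `n = 2 * q + 4`, a parametrisation that avoids truncated
subtraction in the exponents. -/
noncomputable def quadrinomial (p q : ℕ) : ℤ[X] :=
  C ((p : ℤ) ^ (2 * q + 2)) + C ((p : ℤ) ^ (2 * q)) * X ^ 2 + C ((p : ℤ) ^ (2 * q + 4)) * X ^ 3
    + X ^ (2 * q + 4)

namespace quadrinomial

variable {p q : ℕ}

lemma eq_X_pow_add (p q : ℕ) : ∃ r : ℤ[X], r.degree < (2 * q + 4 : ℕ) ∧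
    quadrinomial p q = X ^ (2 * q + 4) + r := by
  refine ⟨_, ?_, add_comm _ _⟩
  refine (degree_le_of_natDegree_le (n := 3) ?_).trans_lt (by exact_mod_cast (by lia))
  compute_degree!

lemma monic (p q : ℕ) : (quadrinomial p q).Monic := by
  obtain ⟨r, hr, h⟩ := eq_X_pow_add p q
  exact h ▸ monic_X_pow_add hr

lemma natDegree_eq (p q : ℕ) : (quadrinomial p q).natDegree = 2 * q + 4 := by
  obtain ⟨r, hr, h⟩ := eq_X_pow_add p q
  rw [h, natDegree_add_eq_left_of_degree_lt, natDegree_X_pow]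
  rwa [degree_X_pow]

lemma coeff_zero_eq (p q : ℕ) : (quadrinomial p q).coeff 0 = (p : ℤ) ^ (2 * q + 2) := by
  simp [quadrinomial, coeff_zero_eq_eval_zero]

lemma aeval_eq {A : Type*} [CommRing A] (p q : ℕ) (z : A) :
    aeval z (quadrinomial p q) =
      p ^ (2 * q + 2) + p ^ (2 * q) * z ^ 2 + p ^ (2 * q + 4) * z ^ 3 + z ^ (2 * q + 4) := by
  simp [quadrinomial]

section Root

variable {K : Type*} [Field K] {z : K}

lemma scaled_root_equation (hp : (p : K) ≠ 0) (hz : aeval z (quadrinomial p q) = 0) :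
    1 + (z / p) ^ 2 + p ^ 5 * (z / p) ^ 3 + p ^ 2 * (z / p) ^ (2 * q + 4) = 0 := by
  rw [aeval_eq] at hz
  obtain ⟨y, rfl⟩ : ∃ y, z = p * y := ⟨z / p, by field_simp⟩
  rw [mul_div_cancel_left₀ _ hp]
  apply mul_left_cancel₀ (pow_ne_zero (2 * q + 2) hp)
  linear_combination hz

lemma root_ne_zero (hp : (p : K) ≠ 0) (hz : aeval z (quadrinomial p q) = 0) : z ≠ 0 := by
  rintro rfl
  simp [aeval_eq, hp] at hz

lemma isIntegral_div_root (hp : (p : K) ≠ 0) (hz : aeval z (quadrinomial p q) = 0) :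
    IsIntegral ℤ (p / z) := by
  have hz0 := root_ne_zero hp hz
  have hmonic : (X ^ (2 * q + 4) + (X ^ (2 * q + 2) + C ((p : ℤ) ^ 5) * X ^ (2 * q + 1)
      + C ((p : ℤ) ^ 2))).Monic := by
    refine monic_X_pow_add ((degree_le_of_natDegree_le (n := 2 * q + 2) ?_).trans_lt ?_)
    · compute_degree!
    · exact_mod_cast (by lia)
  refine ⟨_, hmonic, ?_⟩
  have hy := scaled_root_equation hp hz
  have hy0 : z / p ≠ 0 := div_ne_zero hz0 hp
  rw [← inv_div]
  generalize z / (p : K) = y at hy hy0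
  rw [← aeval_def]
  simp only [map_add, map_mul, map_pow, map_natCast, aeval_X, inv_pow, pow_add]
  field_simp
  linear_combination hy

lemma isIntegral_root_pow_div (hp : (p : K) ≠ 0) (hz : aeval z (quadrinomial p q) = 0) :
    IsIntegral ℤ (z ^ (q + 1) / p ^ q) := by
  have hz0 := root_ne_zero hp hz
  have hsq : (z ^ (q + 1) / p ^ q) ^ 2 = -((p / z) ^ 2 + 1 + p ^ 4 * z) := by
    rw [aeval_eq] at hz
    field_simp
    linear_combination hz
  have hzint : IsIntegral ℤ z := ⟨quadrinomial p q, monic p q, hz⟩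
  have hpint : IsIntegral ℤ (p : K) := by simpa using isIntegral_algebraMap (A := K) (x := (p : ℤ))
  refine IsIntegral.of_pow two_pos (hsq ▸ IsIntegral.neg ?_)
  exact (((isIntegral_div_root hp hz).pow 2).add isIntegral_one).add ((hpint.pow 4).mul hzint)

end Root

section Factor

variable {g : ℤ[X]}

lemma aeval_eq_zero_of_mem_aroots (hdvd : g ∣ quadrinomial p q) {z : ℂ}
    (hz : z ∈ g.aroots ℂ) : aeval z (quadrinomial p q) = 0 :=
  aeval_eq_zero_of_dvd_aeval_eq_zero hdvd (mem_aroots'.1 hz).2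

lemma coeff_zero_dvd_pow_natDegree (hp : p ≠ 0) (hg : g.Monic) (hdvd : g ∣ quadrinomial p q) :
    g.coeff 0 ∣ (p : ℤ) ^ g.natDegree := by
  have hp' : (p : ℂ) ≠ 0 := Nat.cast_ne_zero.2 hp
  have hroot := fun z hz => aeval_eq_zero_of_mem_aroots hdvd (z := z) hz
  simpa using pow_natDegree_mul_coeff_zero_pow_dvd hg (a := (p : ℤ)) (b := 1) (k := 0) (m := 1)
    (fun z : ℂ => p / z) (fun z hz => isIntegral_div_root hp' (hroot z hz))
    fun z hz => by simp [mul_div_cancel₀ _ (root_ne_zero hp' (hroot z hz))]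

lemma pow_natDegree_dvd_coeff_zero_pow (hp : p ≠ 0) (hg : g.Monic) (hdvd : g ∣ quadrinomial p q) :
    ((p : ℤ) ^ q) ^ g.natDegree ∣ g.coeff 0 ^ (q + 1) := by
  have hp' : (p : ℂ) ≠ 0 := Nat.cast_ne_zero.2 hp
  have hroot := fun z hz => aeval_eq_zero_of_mem_aroots hdvd (z := z) hz
  simpa using pow_natDegree_mul_coeff_zero_pow_dvd hg (a := 1) (b := (p : ℤ) ^ q) (k := q + 1)
    (m := 0) (fun z : ℂ => z ^ (q + 1) / p ^ q)
    (fun z hz => isIntegral_root_pow_div hp' (hroot z hz))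
    fun z _ => by simp [mul_div_cancel₀ _ (pow_ne_zero q hp')]

lemma exists_natAbs_coeff_zero_eq_pow (hp : p.Prime) (hg : g.Monic)
    (hdvd : g ∣ quadrinomial p q) :
    ∃ e k, (g.coeff 0).natAbs = p ^ e ∧ g.natDegree = e + k ∧ (q + 1) * k ≤ g.natDegree := by
  have hle := Int.natAbs_dvd_natAbs.2 (coeff_zero_dvd_pow_natDegree hp.ne_zero hg hdvd)
  have hge := Int.natAbs_dvd_natAbs.2 (pow_natDegree_dvd_coeff_zero_pow hp.ne_zero hg hdvd)
  simp only [Int.natAbs_pow, Int.natAbs_natCast] at hle hge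
  obtain ⟨e, he, hge0⟩ := (Nat.dvd_prime_pow hp).1 hle
  obtain ⟨k, hk⟩ := Nat.exists_eq_add_of_le he
  rw [hge0, ← pow_mul, ← pow_mul, Nat.pow_dvd_pow_iff_le_right hp.one_lt] at hge
  exact ⟨e, k, hge0, hk, by nlinarith⟩

lemma sum_logb_norm_scaled_roots (hp : p.Prime) (hg : g.Monic) {e : ℕ}
    (h0 : (g.coeff 0).natAbs = p ^ e) :
    ((g.aroots ℂ).map fun z => Real.logb p ‖z / (p : ℂ)‖).sum = e - g.natDegree := by
  have hp1 : (1 : ℝ) < p := by exact_mod_cast hp.one_lt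
  have hp0 : (p : ℂ) ≠ 0 := Nat.cast_ne_zero.2 hp.ne_zero
  have hne : g.coeff 0 ≠ 0 := by
    rw [← Int.natAbs_ne_zero, h0]
    exact pow_ne_zero e hp.ne_zero
  have hcoeff : (g.map (algebraMap ℤ ℂ)).coeff 0 = (g.coeff 0 : ℤ) := by simp
  have hnorm : ‖((g.coeff 0 : ℤ) : ℂ)‖ = (p : ℝ) ^ e := by
    rw [Complex.norm_intCast, ← Int.cast_abs, Int.abs_eq_natAbs, h0]
    push_cast
    rfl
  have hlogb : ∀ z ∈ g.aroots ℂ, Real.logb p ‖z / (p : ℂ)‖ = Real.logb p ‖z‖ - 1 := by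
    intro z hz
    have hz0 : z ≠ 0 := by
      rintro rfl
      exact hne (by simpa [← coeff_zero_eq_aeval_zero'] using (mem_aroots'.1 hz).2)
    rw [norm_div, Real.logb_div (norm_ne_zero_iff.2 hz0) (norm_ne_zero_iff.2 hp0),
      Complex.norm_natCast, Real.logb_self_eq_one hp1]
  have hsum := sum_map_logb_norm_roots (hg.map (algebraMap ℤ ℂ))
    (by rw [hcoeff]; exact_mod_cast hne) p
  rw [Multiset.map_congr rfl hlogb, Multiset.sum_map_sub, hsum, hcoeff, hnorm, Real.logb_pow,
    Real.logb_self_eq_one hp1, Multiset.map_const', Multiset.sum_replicate,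
    card_aroots_of_monic hg, nsmul_eq_mul, mul_one, mul_one]

lemma natDegree_ne_of_natAbs_coeff_zero_eq (hp : p.Prime) (hg : g.Monic)
    (hdvd : g ∣ quadrinomial p q) {e k : ℕ} (h0 : (g.coeff 0).natAbs = p ^ e)
    (hdeg : g.natDegree = e + k) (hk : k ≤ 1) : g.natDegree ≠ (q + 1) * k + 1 := by
  intro hdeg'
  have hp2 : (2 : ℝ) ≤ p := by exact_mod_cast hp.two_le
  have hp0 : (p : ℂ) ≠ 0 := Nat.cast_ne_zero.2 hp.ne_zero
  apply sum_ne_neg_of_forall_mem_Icc (q := q) hk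
    (s := (g.aroots ℂ).map fun z => Real.logb p ‖z / (p : ℂ)‖)
  · rw [Multiset.card_map, card_aroots_of_monic hg, hdeg']
  · refine Multiset.forall_mem_map_iff.2 fun z hz => logb_norm_mem_Icc_of_root hp2 ?_
    simpa using scaled_root_equation hp0 (aeval_eq_zero_of_mem_aroots hdvd hz)
  · rw [sum_logb_norm_scaled_roots hp hg h0, hdeg]
    push_cast
    ring

end Factor

lemma dvd_natDegree_or_dvd_natDegree (hp : p.Prime) {g h : ℤ[X]} (hg : g.Monic) (hh : h.Monic)
    (hgh : g * h = quadrinomial p q) : q + 1 ∣ g.natDegree ∨ q + 1 ∣ h.natDegree := by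
  have hgdvd : g ∣ quadrinomial p q := ⟨h, hgh.symm⟩
  have hhdvd : h ∣ quadrinomial p q := ⟨g, by rw [mul_comm, hgh]⟩
  obtain ⟨e, k, hg0, hek, hk⟩ := exists_natAbs_coeff_zero_eq_pow hp hg hgdvd
  obtain ⟨f, l, hh0, hfl, hl⟩ := exists_natAbs_coeff_zero_eq_pow hp hh hhdvd
  have hdeg : g.natDegree + h.natDegree = 2 * q + 4 := by
    rw [← hg.natDegree_mul hh, hgh, natDegree_eq]
  have hef : e + f = 2 * q + 2 := by
    apply Nat.pow_right_injective hp.two_le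
    simp only [pow_add p e f, ← hg0, ← hh0, ← Int.natAbs_mul, ← mul_coeff_zero, hgh,
      coeff_zero_eq, Int.natAbs_pow, Int.natAbs_natCast]
  obtain ⟨a, ha⟩ := Nat.exists_eq_add_of_le hk
  obtain ⟨b, hb⟩ := Nat.exists_eq_add_of_le hl
  have hkl : k + l = 2 := by lia
  have hmul : (q + 1) * k + (q + 1) * l = (q + 1) * 2 := by rw [← mul_add, hkl]
  have hab : a + b = 2 := by lia
  obtain rfl | ⟨rfl, rfl⟩ | rfl : a = 0 ∨ (a = 1 ∧ b = 1) ∨ b = 0 := by lia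
  · exact .inl ⟨k, ha⟩
  · obtain hk1 | hl1 : k ≤ 1 ∨ l ≤ 1 := by lia
    · exact absurd ha (natDegree_ne_of_natAbs_coeff_zero_eq hp hg hgdvd hg0 hek hk1)
    · exact absurd hb (natDegree_ne_of_natAbs_coeff_zero_eq hp hh hhdvd hh0 hfl hl1)
  · exact .inr ⟨l, hb⟩

lemma irreducible_or_exists_dvd (hp : p.Prime) (q : ℕ) :
    Irreducible (quadrinomial p q) ∨ ∃ g : ℤ[X], g ∣ quadrinomial p q ∧
      0 < g.natDegree ∧ g.natDegree < 2 * q + 4 ∧ q + 1 ∣ g.natDegree := by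
  have hne : quadrinomial p q ≠ 1 := fun h => by simpa [h] using natDegree_eq p q
  refine or_iff_not_imp_left.2 fun hirr => ?_
  rw [(monic p q).irreducible_iff_natDegree] at hirr
  push Not at hirr
  obtain ⟨g, h, hg, hh, hgh, hg0, hh0⟩ := hirr hne
  have hdeg : g.natDegree + h.natDegree = 2 * q + 4 := by
    rw [← hg.natDegree_mul hh, hgh, natDegree_eq]
  rcases dvd_natDegree_or_dvd_natDegree hp hg hh hgh with hdvd | hdvd
  · exact ⟨g, ⟨h, hgh.symm⟩, by lia, by lia, hdvd⟩
  · exact ⟨h, ⟨g, by rw [mul_comm, hgh]⟩, by lia, by lia, hdvd⟩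

end quadrinomial

/-- **Example 2.** Let `p` be a prime and `n ≥ 6` even.  Then
`Y(x) = pⁿ⁻² + pⁿ⁻⁴x² + pⁿx³ + xⁿ ∈ ℤ[x]` is either irreducible over `ℤ`, or has a
(nontrivial, proper) factor whose degree is a multiple of `(n-2)/2`. -/
theorem example_two (p : ℕ) (hp : p.Prime) (n : ℕ) (hn : 6 ≤ n) (heven : Even n) :
    Irreducible (C ((p : ℤ) ^ (n - 2)) + C ((p : ℤ) ^ (n - 4)) * X ^ 2
        + C ((p : ℤ) ^ n) * X ^ 3 + X ^ n) ∨
      ∃ g : ℤ[X], g ∣ (C ((p : ℤ) ^ (n - 2)) + C ((p : ℤ) ^ (n - 4)) * X ^ 2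
          + C ((p : ℤ) ^ n) * X ^ 3 + X ^ n) ∧
        0 < g.natDegree ∧ g.natDegree < n ∧ (n - 2) / 2 ∣ g.natDegree := by
  obtain ⟨r, rfl⟩ := heven
  obtain ⟨q, rfl⟩ : ∃ q, r = q + 2 := ⟨r - 2, by lia⟩
  rw [show q + 2 + (q + 2) = 2 * q + 4 by ring, show 2 * q + 4 - 2 = 2 * q + 2 by lia,
    show 2 * q + 4 - 4 = 2 * q by lia, show (2 * q + 2) / 2 = q + 1 by lia]
  exact quadrinomial.irreducible_or_exists_dvd hp q
end

section
/- Let K be a field of characteristic zero, n > 2, and d a divisor of n-1. Let a_0(x), a_1(x) ∈ K[x] each be of degree d. Then, viewing Z(x,y) = a_0(x) + a_1(x)·y + y^n as a polynomial in y over K[x], any factorization of Z in K[x][y] has a factor whose degree in y is a multiple of (n-1)/d. -/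
open Polynomial

/-! Give `x` the weight `e = (n - 1) / d` and `y` the weight `1`. Then `Z` has weighted degree `n`,
equal to its degree in `y`. Both degrees are additive and the weighted one is never the smaller, so
they agree for the two factors as well. The form of highest weight of `Z` contains `x ^ d * y`, so
it is not divisible by `y ^ 2`, and the leading form of one of the factors is not divisible by `y`.
That form contains a pure power of `x`, whose weight is a multiple of `e`. -/

section WeightedDegree

variable {R : Type*} [CommSemiring R]

/-- The substitution `x ↦ T ^ e`, `y ↦ Y * T` on polynomials in `y` over `R[x]`, with values in
the polynomials in `T` over `R[Y]`. The variable `T` records the weight of a monomial when `x` has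
weight `e` and `y` has weight `1`. -/
noncomputable def weightedSubst (e : ℕ) : R[X][X] →+* R[X][X] :=
  eval₂RingHom ((mapRingHom C).comp (expand R e : R[X] →+* R[X])) (C X * X)

/-- The weighted degree of a polynomial in `y` over `R[x]`, where `x` has weight `e` and `y` has
weight `1`. It is the degree in `T` after `weightedSubst`, with the value `0` at `0`. -/
noncomputable def weightedDegree (e : ℕ) (f : R[X][X]) : ℕ :=
  (weightedSubst e f).natDegree

/-- The weighted-homogeneous component of highest weight of a polynomial in `y` over `R[x]`,
dehomogenized by `x = 1`: it is a polynomial in `y` only. -/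
noncomputable def leadingForm (e : ℕ) (f : R[X][X]) : R[X] :=
  (weightedSubst e f).leadingCoeff

theorem weightedSubst_monomial (e j : ℕ) (a : R[X]) :
    weightedSubst e (monomial j a) = map C (expand R e a) * C (X ^ j) * X ^ j := by
  simp [weightedSubst, mul_pow, mul_assoc]

theorem coeff_coeff_weightedSubst (e : ℕ) (f : R[X][X]) (k j : ℕ) :
    ((weightedSubst e f).coeff k).coeff j =
      if j ≤ k then (expand R e (f.coeff j)).coeff (k - j) else 0 := by
  induction f using Polynomial.induction_on' with
  | add p q hp hq =>
    simp only [map_add, coeff_add, hp, hq]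
    split_ifs <;> simp only [add_zero]
  | monomial m a =>
    rw [weightedSubst_monomial, coeff_mul_X_pow', coeff_monomial, apply_ite (coeff · j),
      coeff_mul_C, coeff_map, coeff_C_mul, coeff_X_pow, coeff_zero]
    rcases eq_or_ne m j with rfl | hmj
    · simp only [if_true, mul_one]
    · simp only [hmj, hmj.symm, if_false, mul_zero, map_zero, coeff_zero, ite_self]

variable {e : ℕ}

theorem coeff_coeff_weightedSubst_mul_add (he : 0 < e) (f : R[X][X]) (i j : ℕ) :
    ((weightedSubst e f).coeff (e * i + j)).coeff j = (f.coeff j).coeff i := by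
  rw [coeff_coeff_weightedSubst, if_pos (Nat.le_add_left j _), Nat.add_sub_cancel,
    coeff_expand_mul' he]

theorem weightedDegree_le_iff (he : 0 < e) {f : R[X][X]} {n : ℕ} :
    weightedDegree e f ≤ n ↔ ∀ j ∈ f.support, e * (f.coeff j).natDegree + j ≤ n := by
  rw [weightedDegree, natDegree_le_iff_coeff_eq_zero]
  refine ⟨fun h j hj ↦ ?_, fun h k hk ↦ ?_⟩
  · by_contra! hlt
    have hcoeff := coeff_coeff_weightedSubst_mul_add he f (f.coeff j).natDegree j
    rw [h _ hlt, coeff_zero, coeff_natDegree, eq_comm, leadingCoeff_eq_zero] at hcoeff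
    exact mem_support_iff.1 hj hcoeff
  · ext j
    rw [coeff_coeff_weightedSubst, coeff_zero]
    by_cases hj : j ∈ f.support
    · refine ite_eq_right_iff.2 fun _ ↦ coeff_eq_zero_of_natDegree_lt ?_
      rw [natDegree_expand, mul_comm]
      have := h j hj
      lia
    · rw [notMem_support_iff.1 hj, map_zero, coeff_zero, ite_self]

theorem natDegree_le_weightedDegree (he : 0 < e) (f : R[X][X]) :
    f.natDegree ≤ weightedDegree e f := by
  rcases eq_or_ne f 0 with rfl | hf
  · exact natDegree_zero.trans_le (Nat.zero_le _)
  · exact (Nat.le_add_left _ _).trans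
      ((weightedDegree_le_iff he).1 le_rfl _ (natDegree_mem_support_of_nonzero hf))

theorem coeff_leadingForm (he : 0 < e) {f : R[X][X]} {i j : ℕ}
    (h : weightedDegree e f = e * i + j) : (leadingForm e f).coeff j = (f.coeff j).coeff i := by
  rw [leadingForm, leadingCoeff, ← weightedDegree, h, coeff_coeff_weightedSubst_mul_add he]

theorem dvd_weightedDegree_of_not_X_dvd (he : 0 < e) {f : R[X][X]}
    (hf : ¬ X ∣ leadingForm e f) : e ∣ weightedDegree e f := by
  contrapose! hf
  rw [X_dvd_iff, leadingForm, leadingCoeff, ← weightedDegree, coeff_coeff_weightedSubst,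
    if_pos (Nat.zero_le _), Nat.sub_zero, coeff_expand he, if_neg hf]

section NoZeroDivisors

variable [NoZeroDivisors R]

theorem leadingForm_mul (g h : R[X][X]) :
    leadingForm e (g * h) = leadingForm e g * leadingForm e h := by
  rw [leadingForm, map_mul, leadingCoeff_mul, ← leadingForm, ← leadingForm]

theorem weightedDegree_mul {g h : R[X][X]} (hg : leadingForm e g ≠ 0) (hh : leadingForm e h ≠ 0) :
    weightedDegree e (g * h) = weightedDegree e g + weightedDegree e h := by
  rw [weightedDegree, map_mul, natDegree_mul (leadingCoeff_ne_zero.1 hg)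
    (leadingCoeff_ne_zero.1 hh), ← weightedDegree, ← weightedDegree]

theorem dvd_natDegree_or_dvd_natDegree_of_not_X_sq_dvd (he : 0 < e) {g h : R[X][X]}
    (hdeg : weightedDegree e (g * h) = (g * h).natDegree) (hX : ¬ X ^ 2 ∣ leadingForm e (g * h)) :
    e ∣ g.natDegree ∨ e ∣ h.natDegree := by
  rw [leadingForm_mul] at hX
  have hne : leadingForm e g * leadingForm e h ≠ 0 := fun h0 ↦ hX (h0 ▸ dvd_zero _)
  have hsum := weightedDegree_mul (left_ne_zero_of_mul hne) (right_ne_zero_of_mul hne)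
  have hle : (g * h).natDegree ≤ g.natDegree + h.natDegree := natDegree_mul_le
  have hg := natDegree_le_weightedDegree he g
  have hh := natDegree_le_weightedDegree he h
  have hg_eq : weightedDegree e g = g.natDegree := by lia
  have hh_eq : weightedDegree e h = h.natDegree := by lia
  have hX_or : ¬ X ∣ leadingForm e g ∨ ¬ X ∣ leadingForm e h := by
    by_contra! hdvd
    exact hX (sq (X : R[X]) ▸ mul_dvd_mul hdvd.1 hdvd.2)
  rw [← hg_eq, ← hh_eq]
  exact hX_or.imp (dvd_weightedDegree_of_not_X_dvd he) (dvd_weightedDegree_of_not_X_dvd he)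

end NoZeroDivisors

theorem weightedDegree_trinomial [Nontrivial R] (he : 0 < e) {d : ℕ} (hd : 0 < d) {a₀ a₁ : R[X]}
    (ha₀ : a₀.natDegree ≤ d) (ha₁ : a₁.natDegree ≤ d) :
    weightedDegree e (trinomial 0 1 (e * d + 1) a₀ a₁ 1) = e * d + 1 := by
  have hlt : 1 < e * d + 1 := Nat.lt_add_of_pos_left (Nat.mul_pos he hd)
  refine le_antisymm ((weightedDegree_le_iff he).2 fun j hj ↦ ?_) ?_
  · have hj_mem := support_trinomial_subset 0 1 (e * d + 1) a₀ a₁ 1 hj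
    simp only [Finset.mem_insert, Finset.mem_singleton] at hj_mem
    rcases hj_mem with rfl | rfl | rfl
    · rw [trinomial_trailing_coeff' zero_lt_one hlt]
      exact (Nat.mul_le_mul_left e ha₀).trans (Nat.le_succ _)
    · rw [trinomial_middle_coeff zero_lt_one hlt]
      exact Nat.add_le_add_right (Nat.mul_le_mul_left e ha₁) 1
    · rw [trinomial_leading_coeff' zero_lt_one hlt, natDegree_one, mul_zero, zero_add]
  · exact (trinomial_natDegree zero_lt_one hlt one_ne_zero).ge.trans
      (natDegree_le_weightedDegree he _)

theorem not_X_sq_dvd_leadingForm_trinomial (he : 0 < e) {d : ℕ} (hd : 0 < d) {a₀ a₁ : R[X]}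
    (ha₀ : a₀.natDegree ≤ d) (ha₁ : a₁.natDegree = d) :
    ¬ X ^ 2 ∣ leadingForm e (trinomial 0 1 (e * d + 1) a₀ a₁ 1) := by
  have ha₁_ne : a₁ ≠ 0 := ne_zero_of_natDegree_gt (ha₁ ▸ hd)
  have : Nontrivial R := Nontrivial.of_polynomial_ne ha₁_ne
  intro hdvd
  have hcoeff := X_pow_dvd_iff.1 hdvd 1 one_lt_two
  rw [coeff_leadingForm he (weightedDegree_trinomial he hd ha₀ ha₁.le),
    trinomial_middle_coeff zero_lt_one (Nat.lt_add_of_pos_left (Nat.mul_pos he hd)), ← ha₁,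
    coeff_natDegree, leadingCoeff_eq_zero] at hcoeff
  exact ha₁_ne hcoeff

end WeightedDegree

theorem example_three_general {R : Type*} [CommSemiring R] [NoZeroDivisors R] {n d : ℕ}
    (hn : 1 < n) (hd : d ∣ n - 1) {a₀ a₁ : R[X]} (ha₀ : a₀.natDegree ≤ d) (ha₁ : a₁.natDegree = d)
    {g h : R[X][X]} (hgh : C a₀ + C a₁ * X + X ^ n = g * h) :
    (n - 1) / d ∣ g.natDegree ∨ (n - 1) / d ∣ h.natDegree := by
  have hd_pos : 0 < d := Nat.pos_of_dvd_of_pos hd (Nat.sub_pos_of_lt hn)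
  have he_pos : 0 < (n - 1) / d := Nat.div_pos (Nat.le_of_dvd (Nat.sub_pos_of_lt hn) hd) hd_pos
  have hn_eq : (n - 1) / d * d + 1 = n := by rw [Nat.div_mul_cancel hd, Nat.sub_add_cancel hn.le]
  have : Nontrivial R := Nontrivial.of_polynomial_ne (ne_zero_of_natDegree_gt (ha₁ ▸ hd_pos))
  have hZ : trinomial 0 1 n a₀ a₁ 1 = g * h := by simpa [trinomial] using hgh
  have hdeg := weightedDegree_trinomial he_pos hd_pos ha₀ ha₁.le
  have hX := not_X_sq_dvd_leadingForm_trinomial he_pos hd_pos ha₀ ha₁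
  rw [hn_eq, hZ] at hdeg hX
  have hnatDegree : (g * h).natDegree = n := by
    rw [← hZ, trinomial_natDegree zero_lt_one hn one_ne_zero]
  exact dvd_natDegree_or_dvd_natDegree_of_not_X_sq_dvd he_pos (hdeg.trans hnatDegree.symm) hX

/-- **Example 3.** Let `K` be a field of characteristic zero, `n > 2`, and `d` a divisor of
`n - 1`.  Let `a₀(x), a₁(x) ∈ K[x]` each have degree `d`.  Then any factorization of
`Z(x,y) = a₀(x) + a₁(x)y + yⁿ` in `K[x][y]` has a factor whose degree in `y` is a multiple
of `(n-1)/d`. -/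
theorem example_three (K : Type*) [Field K] [CharZero K]
    (n d : ℕ) (hn : 2 < n) (hd : d ∣ n - 1)
    (a₀ a₁ : K[X]) (ha₀ : a₀.natDegree = d) (ha₁ : a₁.natDegree = d) :
    ∀ g h : (K[X])[X], C a₀ + C a₁ * X + X ^ n = g * h →
      (n - 1) / d ∣ g.natDegree ∨ (n - 1) / d ∣ h.natDegree :=
  fun _ _ ↦ example_three_general (by lia) hd ha₀.le ha₁
end
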